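/- arXiv:1203.0686 — 2 statements merged into one kernel-verified Lean document; each statement's English description precedes it below -/
import Mathlib

section
/- Assume that ℝ cannot be covered by fewer than continuum many meager sets (i.e., for every index set I of cardinality less than 𝔠 and every family (M_i)_{i∈I} of meager subsets of ℝ, the union ⋃_{i∈I} M_i is not all of ℝ). Then for every positive integer n there exists a set A ⊆ ℝ^n with Hausdorff dimension n such that for every function f : ℝ^n → ℝ that is uniformly continuous on A and every a < b, f(A) ≠ [a,b]. -/
open scoped ENNReal
open Cardinal hiding univ
open Filter MeasureTheory Module Set TopologicalSpace Topology

/-!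
If the real line is not a union of fewer than `κ` meagre sets, then Martin's axiom below `κ` holds
for countable posets: the binary digits of a sufficiently generic real direct a descending walk
which meets fewer than `κ` prescribed coinitial sets. Applied to basic open sets, this shows that
a compact second countable space is not covered by fewer than `κ` closed nowhere dense sets. Hence,
passing to the support of a restricted measure, a set of positive measure is not covered by fewer
than `κ` closed null sets.

For `κ = 𝔠`, enumerate in order type `𝔠` the measurable sets `S` of positive measure, and the
triples `(g, a, b)` of a continuous function and an interval. At each stage choose a point of `S`
outside the fibres of the earlier functions over their omitted values, then a value in `[a, b]`
which `g` takes at none of the points chosen so far. There is always a point because only omitted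
values with null fibres are ever chosen; this rules out just countably many values. The chosen
points form a set meeting every set of positive Hausdorff measure, hence of full dimension, and
dense, so a uniformly continuous function on it extends to one of the functions `g`.
-/

/-- `LeCovMeagre κ` says that `κ ≤ cov(M)`: the real line is not the union of fewer than `κ` meagre
sets. Index types live in `Type`, which suffices since `cov(M) ≤ 𝔠`. -/
def LeCovMeagre (κ : Cardinal.{0}) : Prop :=
  ∀ (I : Type) (M : I → Set ℝ), #I < κ → (∀ i, IsMeagre (M i)) → ⋃ i, M i ≠ univ

section DyadicWalk

variable {P : Type*} [Preorder P]

open Classical in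
/-- The walk in a preorder directed by binary digits. An integer `z` stands for the digits of the
dyadic interval `[z / 2 ^ k, (z + 1) / 2 ^ k)`, so that its parent is `z / 2`. At time `k`, a digit
`1` is an order to move down to `e k`, obeyed if possible; a digit `0` is an order to stay. -/
noncomputable def dyadicWalk (e : ℕ → P) : ℕ → ℤ → P
  | 0, _ => e 0
  | k + 1, z =>
    if Odd z ∧ e k ≤ dyadicWalk e k (z / 2) then e k else dyadicWalk e k (z / 2)

theorem dyadicWalk_succ_le (e : ℕ → P) (k : ℕ) (z : ℤ) :
    dyadicWalk e (k + 1) z ≤ dyadicWalk e k (z / 2) := by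
  rw [dyadicWalk]
  split_ifs with h
  exacts [h.2, le_rfl]

theorem dyadicWalk_add_mul_two_pow (e : ℕ → P) (k j : ℕ) (z : ℤ) :
    dyadicWalk e (k + j) (z * 2 ^ j) = dyadicWalk e k z := by
  induction j with
  | zero => simp
  | succ j ih =>
    have hnot_odd : ¬ Odd (z * 2 ^ (j + 1)) := by simp [parity_simps]
    have hparent : z * 2 ^ (j + 1) / 2 = z * 2 ^ j := by
      rw [pow_succ, ← mul_assoc, Int.mul_ediv_cancel _ two_ne_zero]
    rw [← add_assoc, dyadicWalk, if_neg (mt And.left hnot_odd), hparent, ih]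

theorem exists_dyadicWalk_eq {e : ℕ → P} (he : ∀ p, ∃ᶠ k in atTop, e k = p) {k : ℕ} {z : ℤ} {p : P}
    (hp : p ≤ dyadicWalk e k z) :
    ∃ (j : ℕ) (w : ℤ), w / 2 ^ j = z ∧ dyadicWalk e (k + j) w = p := by
  obtain ⟨l, hkl, rfl⟩ := frequently_atTop.1 (he p) k
  obtain ⟨j, rfl⟩ := Nat.exists_eq_add_of_le hkl
  have hparent : (z * 2 ^ j * 2 + 1) / 2 = z * 2 ^ j := by lia
  refine ⟨j + 1, z * 2 ^ j * 2 + 1, ?_, ?_⟩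
  · rw [pow_succ', ← Int.ediv_ediv_of_nonneg zero_le_two, hparent,
      Int.mul_ediv_cancel _ (by positivity)]
  · rw [← add_assoc, dyadicWalk, hparent, dyadicWalk_add_mul_two_pow,
      if_pos ⟨Even.add_one ⟨_, mul_two _⟩, hp⟩]

end DyadicWalk

section DyadicInterval

theorem floor_two_pow_add_mul_ediv (k j : ℕ) (t : ℝ) :
    ⌊(2 : ℝ) ^ (k + j) * t⌋ / 2 ^ j = ⌊(2 : ℝ) ^ k * t⌋ := by
  have h := Int.natCast_mul_floor_div_cancel (n := 2 ^ j) (by positivity) (2 ^ k * t)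
  push_cast at h
  rwa [← mul_assoc, ← pow_add, add_comm j k] at h

theorem exists_setOf_floor_two_pow_mul_eq_subset {V : Set ℝ} (hV : IsOpen V) (hne : V.Nonempty) :
    ∃ (k : ℕ) (z : ℤ), {t : ℝ | ⌊2 ^ k * t⌋ = z} ⊆ V := by
  obtain ⟨x, hx⟩ := hne
  obtain ⟨ε, hε, hball⟩ := Metric.isOpen_iff.1 hV x hx
  obtain ⟨k, hk⟩ := pow_unbounded_of_one_lt ε⁻¹ one_lt_two
  refine ⟨k, ⌊2 ^ k * x⌋, fun t ht ↦ hball ?_⟩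
  have hclose : 2 ^ k * |t - x| < 1 := by
    simpa [← mul_sub, abs_mul] using Int.abs_sub_lt_one_of_floor_eq_floor ht
  rw [Metric.mem_ball, Real.dist_eq]
  calc |t - x| < 1 / 2 ^ k := by rwa [lt_div_iff₀' (by positivity)]
    _ < ε := by rw [one_div]; exact inv_lt_of_inv_lt₀ hε hk

theorem interior_setOf_floor_two_pow_mul_eq_nonempty (k : ℕ) (z : ℤ) :
    (interior {t : ℝ | ⌊2 ^ k * t⌋ = z}).Nonempty := by
  have hsub : (fun t : ℝ ↦ 2 ^ k * t) ⁻¹' Ioo z (z + 1) ⊆ {t | ⌊2 ^ k * t⌋ = z} :=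
    fun t ht ↦ Int.floor_eq_iff.2 (Ioo_subset_Ico_self ht)
  have hopen : IsOpen ((fun t : ℝ ↦ 2 ^ k * t) ⁻¹' Ioo z (z + 1)) :=
    isOpen_Ioo.preimage (by fun_prop)
  refine ⟨(z + 1 / 2) / 2 ^ k, interior_maximal hsub hopen ?_⟩
  rw [mem_preimage, mul_div_cancel₀ _ (by positivity)]
  constructor <;> linarith

end DyadicInterval

theorem dense_interior_setOf_exists_dyadicWalk_mem {P : Type*} [Preorder P] {e : ℕ → P}
    (he : ∀ p, ∃ᶠ k in atTop, e k = p) {D : Set P} (hD : IsCoinitial D) :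
    Dense (interior {t : ℝ | ∃ k, dyadicWalk e k ⌊2 ^ k * t⌋ ∈ D}) := by
  refine dense_iff_inter_open.2 fun V hV hne ↦ ?_
  obtain ⟨k, z, hkV⟩ := exists_setOf_floor_two_pow_mul_eq_subset hV hne
  obtain ⟨p, hpD, hp⟩ := hD (dyadicWalk e k z)
  obtain ⟨j, w, hw, hwp⟩ := exists_dyadicWalk_eq he hp
  obtain ⟨x, hx⟩ := interior_setOf_floor_two_pow_mul_eq_nonempty (k + j) w
  refine ⟨x, hkV ?_, interior_mono ?_ hx⟩
  · have hxw := interior_subset hx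
    rw [mem_ofPred_eq] at hxw ⊢
    rw [← hw, ← hxw, floor_two_pow_add_mul_ediv]
  · rintro t rfl
    exact ⟨k + j, hwp ▸ hpD⟩

namespace LeCovMeagre

variable {κ : Cardinal.{0}} {I : Type}

/-- Martin's axiom for countable preorders. -/
theorem exists_antitone_forall_exists_mem (hκ : LeCovMeagre κ) (hI : #I < κ) {P : Type*}
    [Preorder P] [Countable P] [Nonempty P] {D : I → Set P} (hD : ∀ i, IsCoinitial (D i)) :
    ∃ u : ℕ → P, Antitone u ∧ ∀ i, ∃ k, u k ∈ D i := by
  obtain ⟨f, hf⟩ := exists_surjective_nat P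
  let e (k : ℕ) : P := f (Nat.unpair k).1
  have he (p : P) : ∃ᶠ k in atTop, e k = p := by
    obtain ⟨m, rfl⟩ := hf p
    exact frequently_atTop.2 fun k ↦ ⟨Nat.pair m k, Nat.right_le_pair m k, by simp [e]⟩
  have hmeagre (i : I) : IsMeagre {t : ℝ | ∃ k, dyadicWalk e k ⌊2 ^ k * t⌋ ∈ D i}ᶜ := by
    rw [IsMeagre, compl_compl]
    exact mem_of_superset (residual_of_dense_open isOpen_interior
      (dense_interior_setOf_exists_dyadicWalk_mem he (hD i))) interior_subset
  obtain ⟨t, ht⟩ := (ne_univ_iff_exists_notMem _).1 (hκ I _ hI hmeagre)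
  simp only [mem_iUnion, mem_compl_iff, not_exists, not_not] at ht
  refine ⟨fun k ↦ dyadicWalk e k ⌊2 ^ k * t⌋, antitone_nat_of_succ_le fun k ↦ ?_, ht⟩
  have hparent : ⌊2 ^ (k + 1) * t⌋ / 2 = ⌊2 ^ k * t⌋ := floor_two_pow_add_mul_ediv k 1 t
  exact hparent ▸ dyadicWalk_succ_le e k ⌊2 ^ (k + 1) * t⌋

theorem iUnion_ne_univ_of_isNowhereDense (hκ : LeCovMeagre κ) (hI : #I < κ) {Y : Type*}
    [TopologicalSpace Y] [CompactSpace Y] [RegularSpace Y] [SecondCountableTopology Y] [Nonempty Y]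
    {F : I → Set Y} (hF : ∀ i, IsNowhereDense (F i)) : ⋃ i, F i ≠ univ := by
  have hbasis := isBasis_countableBasis Y
  obtain ⟨U₀, hU₀, -⟩ :=
    hbasis.exists_subset_of_mem_open (mem_univ (Classical.arbitrary Y)) isOpen_univ
  have : Nonempty (countableBasis Y) := ⟨U₀, hU₀⟩
  have hcoinitial (i : I) :
      IsCoinitial {U : countableBasis Y | Disjoint (closure (U : Set Y)) (F i)} := by
    intro U
    have hdense : Dense (closure (F i))ᶜ := interior_eq_empty_iff_dense_compl.1 (hF i)
    have hU : IsOpen (U : Set Y) := isOpen_of_mem_countableBasis U.2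
    obtain ⟨y, hyU, hyF⟩ := hdense.inter_open_nonempty U hU (nonempty_of_mem_countableBasis U.2)
    obtain ⟨W, hW, -, hWsub⟩ := hbasis.exists_closure_subset
      ((hU.inter isClosed_closure.isOpen_compl).mem_nhds ⟨hyU, hyF⟩)
    refine ⟨⟨W, hW⟩, ?_, fun z hz ↦ (hWsub (subset_closure hz)).1⟩
    exact disjoint_left.2 fun z hz hzF ↦ (hWsub hz).2 (subset_closure hzF)
  obtain ⟨u, hu, huF⟩ := hκ.exists_antitone_forall_exists_mem hI hcoinitial
  obtain ⟨y, hy⟩ : (⋂ k, closure (u k : Set Y)).Nonempty :=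
    IsCompact.nonempty_iInter_of_sequence_nonempty_isCompact_isClosed _
      (fun k ↦ closure_mono (hu k.le_succ))
      (fun k ↦ (nonempty_of_mem_countableBasis (u k).2).closure)
      isClosed_closure.isCompact fun _ ↦ isClosed_closure
  refine (ne_univ_iff_exists_notMem _).2 ⟨y, fun hyF ↦ ?_⟩
  obtain ⟨i, hi⟩ := mem_iUnion.1 hyF
  obtain ⟨k, hk⟩ := huF i
  exact disjoint_left.1 hk (mem_iInter.1 hy k) hi

end LeCovMeagre

section Measure

variable {X : Type*} [TopologicalSpace X] [T2Space X] [SecondCountableTopology X]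
  [MeasurableSpace X] [OpensMeasurableSpace X] (μ : Measure X)

theorem exists_isCompact_isOpenPosMeasure_comap_subtype [μ.InnerRegular] {S : Set X}
    (hS : MeasurableSet S) (hμS : μ S ≠ 0) :
    ∃ K ⊆ S, IsCompact K ∧ K.Nonempty ∧ (μ.comap ((↑) : K → X)).IsOpenPosMeasure := by
  obtain ⟨C, hCS, hC, hμC⟩ := hS.exists_lt_isCompact (pos_iff_ne_zero.2 hμS)
  have hinter (U : Set X) : μ (U ∩ (C ∩ (μ.restrict C).support)) = μ.restrict C U := by
    rw [← measure_inter_conull (s := U) Measure.measure_compl_support,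
      Measure.restrict_apply' hC.measurableSet]
    congr 1
    tauto_set
  have hK : IsCompact (C ∩ (μ.restrict C).support) := hC.inter_right Measure.isClosed_support
  refine ⟨C ∩ (μ.restrict C).support, inter_subset_left.trans hCS, hK, ?_, ⟨?_⟩⟩
  · refine nonempty_of_measure_ne_zero (μ := μ) ?_
    simpa using (hinter univ).trans_ne (by simpa using hμC.ne')
  · rintro - ⟨V, hV, rfl⟩ ⟨x, hxV⟩
    rw [comap_subtype_coe_apply hK.measurableSet, Subtype.image_preimage_coe, inter_comm, hinter]
    exact ((Measure.mem_support_iff_forall _).1 x.2.2 V (hV.mem_nhds hxV)).ne'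

theorem LeCovMeagre.exists_mem_forall_notMem_of_isClosed_of_null {κ : Cardinal.{0}} {I : Type}
    (hκ : LeCovMeagre κ) (hI : #I < κ) [μ.InnerRegular] {S : Set X} (hS : MeasurableSet S)
    (hμS : μ S ≠ 0) {F : I → Set X} (hF : ∀ i, IsClosed (F i)) (hμF : ∀ i, μ (F i) = 0) :
    ∃ x ∈ S, ∀ i, x ∉ F i := by
  obtain ⟨K, hKS, hK, hKne, hpos⟩ := exists_isCompact_isOpenPosMeasure_comap_subtype μ hS hμS
  have : CompactSpace K := isCompact_iff_compactSpace.1 hK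
  have : Nonempty K := hKne.to_subtype
  have hnowhere (i : I) : IsNowhereDense ((↑) ⁻¹' F i : Set K) := by
    refine .of_isClosed_null (μ := μ.comap ((↑) : K → X))
      ((hF i).preimage continuous_subtype_val) ?_
    rw [comap_subtype_coe_apply hK.measurableSet, Subtype.image_preimage_coe]
    exact measure_inter_null_of_null_right _ (hμF i)
  obtain ⟨x, hx⟩ :=
    (ne_univ_iff_exists_notMem _).1 (hκ.iUnion_ne_univ_of_isNowhereDense hI hnowhere)
  exact ⟨x, hKS x.2, fun i hi ↦ hx (mem_iUnion.2 ⟨i, hi⟩)⟩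

end Measure

theorem exists_mem_Icc_notMem_measure_preimage_singleton_eq_zero {X : Type*} [MeasurableSpace X]
    (μ : Measure X) [SFinite μ] {g : X → ℝ} (hg : Measurable g) {B : Set ℝ} (hB : #B < 𝔠) {a b : ℝ}
    (hab : a < b) : ∃ y ∈ Icc a b, y ∉ B ∧ μ (g ⁻¹' {y}) = 0 := by
  have hatoms : {y | 0 < μ {x | g x = y}}.Countable := Measure.countable_meas_level_set_pos hg
  have hcard : #↑(B ∪ {y | 0 < μ {x | g x = y}}) < #(Icc a b) := by
    rw [mk_Icc_real hab]
    exact (mk_union_le _ _).trans_lt (add_lt_of_lt aleph0_le_continuum hB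
      (hatoms.le_aleph0.trans_lt aleph0_lt_continuum))
  obtain ⟨y, hyI, hy⟩ := not_subset.1 fun h ↦ (mk_le_mk_of_subset h).not_gt hcard
  simp only [mem_union, mem_ofPred_eq, not_or, not_lt, nonpos_iff_eq_zero] at hy
  exact ⟨y, hyI, hy⟩

theorem exists_forall_of_wellFoundedLT {ι : Type*} [LT ι] [WellFoundedLT ι] {V : ι → Type*}
    (Q : ∀ i, (∀ j, j < i → V j) → V i → Prop) (h : ∀ i prev, ∃ v, Q i prev v) :
    ∃ v : ∀ i, V i, ∀ i, Q i (fun j _ ↦ v j) (v i) := by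
  choose next hnext using h
  let v : ∀ i, V i := wellFounded_lt.fix next
  have hv (i : ι) : v i = next i fun j _ ↦ v j := wellFounded_lt.fix_eq next i
  exact ⟨v, fun i ↦ hv i ▸ hnext i _⟩

theorem exists_surjective_toType_ord_continuum {T : Type*} [Nonempty T] (hT : #T ≤ 𝔠) :
    ∃ f : Ordinal.ToType (ord (𝔠 : Cardinal.{0})) → T, Function.Surjective f := by
  obtain ⟨φ⟩ : Nonempty (T ↪ Ordinal.ToType (ord (𝔠 : Cardinal.{0}))) := by
    rw [← lift_mk_le']
    simpa using hT
  exact ⟨Function.invFun φ, Function.invFun_surjective φ.injective⟩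

theorem mk_setOf_measurableSet_le_continuum (X : Type*) [MeasurableSpace X]
    [MeasurableSpace.CountablyGenerated X] : #{S : Set X | MeasurableSet S} ≤ 𝔠 := by
  obtain ⟨b, hb, rfl⟩ := MeasurableSpace.CountablyGenerated.isCountablyGenerated (α := X)
  exact MeasurableSpace.cardinal_measurableSet_le_continuum
    (hb.le_aleph0.trans aleph0_le_continuum)

theorem mk_continuousMap_le_continuum (X : Type*) {Y : Type*} [TopologicalSpace X]
    [SeparableSpace X] [TopologicalSpace Y] [T2Space Y] (hY : #Y ≤ 𝔠) : #C(X, Y) ≤ 𝔠 := by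
  obtain ⟨D, hD, hdense⟩ := exists_countable_dense X
  have hinj : Function.Injective fun (f : C(X, Y)) (d : D) ↦ f d := fun f g h ↦
    DFunLike.coe_injective <| f.continuous.ext_on hdense g.continuous fun d hd ↦ congrFun h ⟨d, hd⟩
  calc #C(X, Y) ≤ #(D → Y) := mk_le_of_injective hinj
    _ = lift #Y ^ lift #D := mk_arrow D Y
    _ ≤ 𝔠 ^ lift #D := power_le_power_right (lift_le_continuum.2 hY)
    _ ≤ 𝔠 ^ ℵ₀ := power_le_power_left continuum_ne_zero (lift_le_aleph0.2 hD.le_aleph0)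
    _ = 𝔠 := continuum_power_aleph0

theorem exists_continuousMap_eqOn_of_uniformContinuousOn {X Y : Type*} [UniformSpace X]
    [UniformSpace Y] [CompleteSpace Y] [T0Space Y] {f : X → Y} {A : Set X}
    (hf : UniformContinuousOn f A) (hA : Dense A) : ∃ g : C(X, Y), EqOn g f A := by
  have hf' : UniformContinuous (A.domRestrict f) := uniformContinuousOn_iff_restrict.1 hf
  exact ⟨⟨hA.extend (A.domRestrict f), (hA.uniformContinuous_extend hf').continuous⟩,
    fun x hx ↦ hA.extend_of_ind hf' ⟨x, hx⟩⟩

theorem LeCovMeagre.exists_forall_mem_and_forall_apply_ne {X : Type*} [TopologicalSpace X]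
    [T2Space X] [SecondCountableTopology X] [MeasurableSpace X] [OpensMeasurableSpace X]
    (hcov : LeCovMeagre 𝔠) (μ : Measure X) [μ.InnerRegular] [SFinite μ] {ι : Type} [LinearOrder ι]
    [WellFoundedLT ι] (hι : ∀ i : ι, #(Iio i) < 𝔠) {S : ι → Set X} (hS : ∀ i, MeasurableSet (S i))
    (hμS : ∀ i, μ (S i) ≠ 0) (g : ι → C(X, ℝ)) {a b : ι → ℝ} (hab : ∀ i, a i < b i) :
    ∃ (x : ι → X) (y : ι → ℝ), (∀ i, x i ∈ S i ∧ y i ∈ Icc (a i) (b i)) ∧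
      ∀ i j, g i (x j) ≠ y i := by
  let V (i : ι) : Type _ := S i × {y : ℝ // y ∈ Icc (a i) (b i) ∧ μ (g i ⁻¹' {y}) = 0}
  obtain ⟨v, hv⟩ : ∃ v : ∀ i, V i, ∀ i, (∀ j < i, g j (v i).1 ≠ (v j).2) ∧
      (∀ j < i, g i (v j).1 ≠ (v i).2) ∧ g i (v i).1 ≠ (v i).2 := by
    refine exists_forall_of_wellFoundedLT (V := V) (fun i prev v ↦
      (∀ j hj, g j v.1 ≠ (prev j hj).2) ∧ (∀ j hj, g i (prev j hj).1 ≠ v.2) ∧ g i v.1 ≠ v.2)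
      fun i prev ↦ ?_
    obtain ⟨x, hxS, hx⟩ := hcov.exists_mem_forall_notMem_of_isClosed_of_null μ (hι i) (hS i) (hμS i)
      (F := fun j : Iio i ↦ g j ⁻¹' {((prev j j.2).2 : ℝ)})
      (fun j ↦ isClosed_singleton.preimage (g j).continuous) (fun j ↦ (prev j j.2).2.2.2)
    let B : Set ℝ := insert (g i x) (range fun j : Iio i ↦ g i (prev j j.2).1)
    have hB : #B < 𝔠 := mk_insert_le.trans_lt <|
      add_lt_of_lt aleph0_le_continuum (mk_range_le.trans_lt (hι i))
        (one_lt_aleph0.trans aleph0_lt_continuum)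
    obtain ⟨y, hyI, hyB, hμy⟩ := exists_mem_Icc_notMem_measure_preimage_singleton_eq_zero μ
      (g i).measurable hB (hab i)
    refine ⟨(⟨x, hxS⟩, ⟨y, hyI, hμy⟩), fun j hj ↦ hx ⟨j, hj⟩, fun j hj hjy ↦ hyB ?_, ?_⟩
    · exact mem_insert_of_mem _ ⟨⟨j, hj⟩, hjy⟩
    · exact fun hxy ↦ hyB (.inl hxy.symm)
  refine ⟨fun i ↦ (v i).1, fun i ↦ (v i).2, fun i ↦ ⟨(v i).1.2, (v i).2.2.1⟩, fun i j ↦ ?_⟩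
  rcases lt_trichotomy i j with hij | rfl | hji
  exacts [(hv j).1 i hij, (hv i).2.2, (hv i).2.1 j hji]

/-- A set is thick when its complement has inner measure zero; it then has full outer measure. -/
def IsThick {X : Type*} [MeasurableSpace X] (μ : Measure X) (A : Set X) : Prop :=
  ∀ S, MeasurableSet S → Disjoint S A → μ S = 0

namespace IsThick

variable {X : Type*} [MeasurableSpace X] {μ : Measure X} {A : Set X}

theorem measure_eq (hA : IsThick μ A) : μ A = μ univ := by
  have hnull : μ (toMeasurable μ A)ᶜ = 0 := hA _ (measurableSet_toMeasurable μ A).compl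
    (disjoint_compl_left.mono_right (subset_toMeasurable μ A))
  rw [← measure_toMeasurable, ← measure_inter_conull (s := univ) hnull, univ_inter]

theorem dense [TopologicalSpace X] [OpensMeasurableSpace X] [μ.IsOpenPosMeasure]
    (hA : IsThick μ A) : Dense A := by
  refine dense_iff_inter_open.2 fun U hU hne ↦ not_disjoint_iff_nonempty_inter.1 fun hdisj ↦ ?_
  exact hU.measure_ne_zero μ hne (hA U hU.measurableSet hdisj)

end IsThick

theorem LeCovMeagre.exists_isThick_forall_not_Icc_subset_image {X : Type*} [TopologicalSpace X]
    [T2Space X] [SecondCountableTopology X] [MeasurableSpace X] [BorelSpace X]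
    (hcov : LeCovMeagre 𝔠) (μ : Measure X) [μ.InnerRegular] [SFinite μ] :
    ∃ A : Set X, IsThick μ A ∧ ∀ g : C(X, ℝ), ∀ a b, a < b → ¬ Icc a b ⊆ g '' A := by
  rcases eq_or_ne μ 0 with rfl | hμ
  · exact ⟨∅, fun _ _ _ ↦ rfl, fun g a b hab h ↦ by simpa using h (left_mem_Icc.2 hab.le)⟩
  have : Nonempty {S : Set X // MeasurableSet S ∧ μ S ≠ 0} :=
    ⟨univ, .univ, Measure.measure_univ_ne_zero.2 hμ⟩
  have : Nonempty {p : ℝ × ℝ // p.1 < p.2} := ⟨(0, 1), zero_lt_one⟩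
  have hsets : #{S : Set X // MeasurableSet S ∧ μ S ≠ 0} ≤ 𝔠 :=
    (mk_subtype_mono fun _ ↦ And.left).trans (mk_setOf_measurableSet_le_continuum X)
  have htasks : #(C(X, ℝ) × {p : ℝ × ℝ // p.1 < p.2}) ≤ 𝔠 := by
    have hmaps : #C(X, ℝ) ≤ 𝔠 := mk_continuousMap_le_continuum X mk_real.le
    have hpairs : #{p : ℝ × ℝ // p.1 < p.2} ≤ 𝔠 := (mk_subtype_le _).trans (by simp [mk_real])
    rw [mk_prod, ← continuum_mul_self]
    exact mul_le_mul' (lift_le_continuum.2 hmaps) (lift_le_continuum.2 hpairs)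
  obtain ⟨S, hS⟩ := exists_surjective_toType_ord_continuum hsets
  obtain ⟨task, htask⟩ := exists_surjective_toType_ord_continuum htasks
  obtain ⟨x, y, hxy, hne⟩ := hcov.exists_forall_mem_and_forall_apply_ne μ
    (fun i ↦ by simpa using mk_Iio_lt i) (fun i ↦ (S i).2.1) (fun i ↦ (S i).2.2)
    (fun i ↦ (task i).1) (fun i ↦ (task i).2.2)
  refine ⟨range x, fun s hs hdisj ↦ ?_, fun g a b hab hsub ↦ ?_⟩
  · by_contra hμs
    obtain ⟨i, hi⟩ := hS ⟨s, hs, hμs⟩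
    exact disjoint_left.1 hdisj (by simpa [hi] using (hxy i).1) (mem_range_self i)
  · obtain ⟨i, hi⟩ := htask (g, ⟨(a, b), hab⟩)
    obtain ⟨-, ⟨j, rfl⟩, hj⟩ := hsub (by simpa [hi] using (hxy i).2)
    exact hne i j (by simpa [hi] using hj)

theorem dimH_eq_finrank_of_isThick {E : Type*} [NormedAddCommGroup E] [NormedSpace ℝ E]
    [FiniteDimensional ℝ E] [MeasurableSpace E] [BorelSpace E] {A : Set E}
    (hA : IsThick μH[finrank ℝ E] A) : dimH A = finrank ℝ E := by
  refine le_antisymm ((dimH_mono (subset_univ A)).trans_eq (Real.dimH_univ_eq_finrank E)) ?_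
  have hμA : μH[finrank ℝ E] A ≠ 0 := by
    rw [hA.measure_eq]
    exact isOpen_univ.measure_ne_zero _ univ_nonempty
  exact le_dimH_of_hausdorffMeasure_ne_zero (d := finrank ℝ E) hμA

theorem covMeager_eq_continuum_imp_exists_set_no_uniformlyContinuousOn_onto_interval_general
    (hcov : LeCovMeagre 𝔠) (E : Type*) [NormedAddCommGroup E] [NormedSpace ℝ E]
    [FiniteDimensional ℝ E] :
    ∃ A : Set E, dimH A = finrank ℝ E ∧
      ∀ f : E → ℝ, UniformContinuousOn f A → ∀ a b, a < b → ¬ Icc a b ⊆ f '' A := by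
  borelize E
  obtain ⟨A, hA, himage⟩ := hcov.exists_isThick_forall_not_Icc_subset_image
    (μH[finrank ℝ E] : Measure E)
  refine ⟨A, dimH_eq_finrank_of_isThick hA, fun f hf a b hab ↦ ?_⟩
  obtain ⟨g, hg⟩ := exists_continuousMap_eqOn_of_uniformContinuousOn hf hA.dense
  rw [← hg.image_eq]
  exact himage g a b hab

/-- Assume that `ℝ` cannot be covered by fewer than continuum many meager sets
(`cov(M) = 𝔠`). Then for every positive integer `n` there exists a set `A ⊆ ℝ^n` with Hausdorff
dimension `n` such that for every function `f : ℝ^n → ℝ` that is uniformly continuous on `A`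
and every `a < b`, `f(A) ≠ [a,b]`. -/
theorem covMeager_eq_continuum_imp_exists_set_no_uniformlyContinuousOn_onto_interval
    (hcov : ∀ (I : Type) (M : I → Set ℝ),
      Cardinal.mk I < Cardinal.continuum → (∀ i, IsMeagre (M i)) →
      (⋃ i, M i) ≠ Set.univ)
    (n : ℕ) (hn : 0 < n) :
    ∃ A : Set (EuclideanSpace ℝ (Fin n)),
      dimH A = n ∧
      ∀ f : EuclideanSpace ℝ (Fin n) → ℝ, UniformContinuousOn f A →
        ∀ a b : ℝ, a < b → f '' A ≠ Set.Icc a b := by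
  obtain ⟨A, hdim, hA⟩ :=
    covMeager_eq_continuum_imp_exists_set_no_uniformlyContinuousOn_onto_interval_general hcov
      (EuclideanSpace ℝ (Fin n))
  exact ⟨A, by simpa using hdim, fun f hf a b hab h ↦ hA f hf a b hab h.ge⟩
end

section
/- Assume that ℝ can be covered by fewer than continuum many meager sets (i.e., there is an index set I of cardinality less than 𝔠 and a family (M_i)_{i∈I} of meager subsets of ℝ with ⋃_{i∈I} M_i = ℝ). Then for every real number r there exists a separable metric space X of cardinality strictly less than 𝔠 whose Hausdorff dimension is at least r; consequently no function from X onto a non-degenerate segment exists. -/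
open scoped ENNReal

/-!
Bartoszyński: if every `I`-indexed family of sequences in `ℕ → ℕ` is met somewhere by a single
sequence, then any `I`-indexed family of dense subsets of a countable poset is met by a single
descending sequence. Applied to the poset of relatively compact basic open sets, this shows that
`I` many meagre sets do not cover. So a cover by `I` many meagre sets provides a family
`f : I → ℕ → ℕ` that no sequence meets.

Recode `f k` by listing at level `n` the whole block `f k 0, …, f k (B n - 1)`, where `B n` grows
like `2 ^ n²`, and let `X` be the set of the recoded sequences with the first-difference metric.
If `X` had finite dimension, it would be covered by sets `t i`, each of which fixes the block at
some level `N i`, with only `B n` many levels `N i ≤ n`. By Hall's theorem distinct positions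
`p i < B (N i)` can be assigned to the sets, and the sequence whose value at `p i` is the one
dictated by `t i` meets every `f k`, a contradiction.
-/

open Filter Set TopologicalSpace
open scoped NNReal

universe u v

theorem exists_injective_forall_mem_of_card_le {ι : Type u} {α : Type v} {t : ι → Finset α}
    (ht : ∀ s : Finset ι, s.Nonempty → ∃ i ∈ s, s.card ≤ (t i).card) :
    ∃ p : ι → α, Function.Injective p ∧ ∀ i, p i ∈ t i := by
  classical
  refine (Finset.all_card_le_biUnion_card_iff_exists_injective t).1 fun s => ?_
  rcases s.eq_empty_or_nonempty with rfl | hs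
  · exact Nat.zero_le _
  · obtain ⟨i, hi, hcard⟩ := ht s hs
    exact hcard.trans (Finset.card_le_card (Finset.subset_biUnion_of_mem t hi))

theorem frequently_iterate_of_frequently_comp_le {φ f : ℕ → ℕ} (hφ : Monotone φ)
    (hlt : ∀ n, n < φ n) (hf : Monotone f) (hfreq : ∃ᶠ n in atTop, f (f n) ≤ φ n) :
    ∃ᶠ k in atTop, f (φ^[k] 0) ≤ φ^[k + 1] 0 := by
  have hsucc (k : ℕ) : φ^[k + 1] 0 = φ (φ^[k] 0) := Function.iterate_succ_apply' φ k 0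
  have hmono : StrictMono fun k => φ^[k] 0 :=
    strictMono_nat_of_lt_succ fun k => (hlt _).trans_eq (hsucc k).symm
  refine frequently_atTop.2 fun m => ?_
  obtain ⟨n, hmn, hn⟩ := frequently_atTop.1 hfreq (φ^[m] 0)
  obtain ⟨k, hmk, hkn, hnk⟩ : ∃ k, m ≤ k ∧ φ^[k] 0 ≤ n ∧ n < φ^[k + 1] 0 := by
    have hunion := biUnion_Ici_Ico_map_succ (f := fun k => φ^[k] 0) (a := m)
      (fun k hk => hmono.monotone hk) fun ⟨b, hb⟩ => by
        have : φ^[max m (b + 1)] 0 ≤ b := hb (mem_image_of_mem _ (le_max_left m (b + 1)))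
        have := hmono.le_apply (x := max m (b + 1))
        grind
    simpa only [mem_iUnion, mem_Ici, mem_Ico, exists_prop, Order.succ_eq_add_one]
      using hunion.ge (mem_Ici.2 hmn)
  -- If `f` does not stay within the interval `[φ^[k] 0, φ^[k + 1] 0]`, it does on the next one.
  rcases le_or_gt (f (φ^[k] 0)) (φ^[k + 1] 0) with hle | hgt
  · exact ⟨k, hmk, hle⟩
  · refine ⟨k + 1, by lia, ?_⟩
    calc f (φ^[k + 1] 0) ≤ f (f n) := hf (hgt.le.trans (hf hkn))
      _ ≤ φ n := hn
      _ ≤ φ (φ^[k + 1] 0) := hφ hnk.le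
      _ = φ^[k + 1 + 1] 0 := (hsucc _).symm

/-- `J`-indexed families of sequences of natural numbers can be guessed: some single sequence
agrees at least once with each member of the family. For infinite `J` this is the combinatorial
form of `#J < cov(M)`. -/
def Guessable (J : Type u) : Prop :=
  ∀ f : J → ℕ → ℕ, ∃ g : ℕ → ℕ, ∀ j, ∃ n, f j n = g n

theorem exists_forall_exists_eq_of_nat {J : Type u} {S : J → Set ℕ}
    (h : ∀ f : J → ℕ → ℕ, ∃ g : ℕ → ℕ, ∀ j, ∃ n ∈ S j, f j n = g n)
    {β : ℕ → Type v} [∀ n, Countable (β n)] [∀ n, Nonempty (β n)] (f : J → ∀ n, β n) :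
    ∃ g : ∀ n, β n, ∀ j, ∃ n ∈ S j, f j n = g n := by
  choose e he using fun n => exists_injective_nat (β n)
  obtain ⟨g, hg⟩ := h fun j n => e n (f j n)
  refine ⟨fun n => Function.invFun (e n) (g n), fun j => ?_⟩
  obtain ⟨n, hn, hfg⟩ := hg j
  exact ⟨n, hn, by simp only [← hfg, Function.leftInverse_invFun (he n) (f j n)]⟩

namespace Guessable

variable {J : Type u}

theorem of_equiv {J' : Type v} (h : Guessable J) (e : J' ≃ J) : Guessable J' := fun f => by
  obtain ⟨g, hg⟩ := h fun j => f (e.symm j)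
  exact ⟨g, fun j => by simpa using hg (e j)⟩

theorem prod_nat [Infinite J] (h : Guessable J) : Guessable (J × ℕ) := by
  have hcard : Cardinal.mk (J × ℕ) = Cardinal.mk J := by simp
  exact h.of_equiv (Cardinal.eq.1 hcard).some

/- For each `n`, guess `n + 1` elements of the infinite set together with the values there; this
leaves enough room to make the guesses for different `n` at different places. -/
theorem exists_mem_eq_nat (h : Guessable J) {S : J → Set ℕ} (hS : ∀ j, (S j).Infinite)
    (f : J → ℕ → ℕ) : ∃ g : ℕ → ℕ, ∀ j, ∃ n ∈ S j, f j n = g n := by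
  let β (n : ℕ) : Type := Σ D : {D : Finset ℕ // D.card = n + 1}, D.1 → ℕ
  have (n : ℕ) : Nonempty (β n) := ⟨⟨⟨Finset.range (n + 1), Finset.card_range _⟩, 0⟩⟩
  choose D hDS hDcard using fun j n => (hS j).exists_subset_card_eq (n + 1)
  obtain ⟨G, hG⟩ := exists_forall_exists_eq_of_nat (S := fun _ : J => univ) (β := β)
    (by simpa [Guessable] using h) fun j n => ⟨⟨D j n, hDcard j n⟩, fun x => f j x⟩
  obtain ⟨x, hxinj, hx⟩ := exists_injective_forall_mem_of_card_le (t := fun n => (G n).1.1)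
    fun s hs => ⟨s.max' hs, s.max'_mem hs, by
      rw [(G _).1.2, ← Finset.card_range (s.max' hs + 1)]
      exact Finset.card_le_card fun m hm => Finset.mem_range_succ_iff.2 (s.le_max' m hm)⟩
  refine ⟨Function.extend x (fun n => (G n).2 ⟨x n, hx n⟩) 0, fun j => ?_⟩
  obtain ⟨n, -, hn⟩ := hG j
  have hval : ∀ q : β n, ⟨⟨D j n, hDcard j n⟩, fun x => f j x⟩ = q →
      ∀ y (hy : y ∈ q.1.1), y ∈ D j n ∧ f j y = q.2 ⟨y, hy⟩ := by
    rintro _ rfl y hy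
    exact ⟨hy, rfl⟩
  obtain ⟨hmem, heq⟩ := hval (G n) hn (x n) (hx n)
  exact ⟨x n, hDS j n hmem, by rw [heq, hxinj.extend_apply]⟩

theorem exists_mem_eq (h : Guessable J) {S : J → Set ℕ} (hS : ∀ j, (S j).Infinite)
    {β : ℕ → Type v} [∀ n, Countable (β n)] [∀ n, Nonempty (β n)] (f : J → ∀ n, β n) :
    ∃ g : ∀ n, β n, ∀ j, ∃ n ∈ S j, f j n = g n :=
  exists_forall_exists_eq_of_nat (h.exists_mem_eq_nat hS) f

theorem exists_frequently_eq [Infinite J] (h : Guessable J) (f : J → ℕ → ℕ) :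
    ∃ g : ℕ → ℕ, ∀ j, ∃ᶠ n in atTop, f j n = g n := by
  obtain ⟨g, hg⟩ := h.prod_nat.exists_mem_eq (S := fun p => Ici p.2)
    (fun p => Ici_infinite p.2) fun p => f p.1
  exact ⟨g, fun j => frequently_atTop.2 fun m => hg (j, m)⟩

theorem exists_strictMono_frequently_le [Infinite J] (h : Guessable J) (f : J → ℕ → ℕ) :
    ∃ a : ℕ → ℕ, StrictMono a ∧ ∀ j, ∃ᶠ k in atTop, ∀ s ≤ a k, f j s ≤ a (k + 1) := by
  obtain ⟨g, hg⟩ := h.exists_frequently_eq fun j n => partialSups (f j) (partialSups (f j) n)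
  let φ (n : ℕ) : ℕ := partialSups g n + n + 1
  have hφ : Monotone φ := ((partialSups g).monotone.add monotone_id).add_const 1
  have hlt (n : ℕ) : n < φ n := by grind
  refine ⟨fun k => φ^[k] 0, strictMono_nat_of_lt_succ fun k => ?_, fun j => ?_⟩
  · rw [Function.iterate_succ_apply']
    exact hlt _
  have hle : ∃ᶠ n in atTop, partialSups (f j) (partialSups (f j) n) ≤ φ n :=
    (hg j).mono fun n hn => by
      rw [hn]
      exact (le_partialSups g n).trans (by lia)
  exact (frequently_iterate_of_frequently_comp_le hφ hlt (partialSups (f j)).monotone hle).mono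
    fun k hk s hs => (le_partialSups_of_le (f j) hs).trans hk

/- Martin's axiom for the countable poset `P`, generalizing the Rasiowa–Sikorski lemma. The sequence
`a` bounds the codes of the elements considered at each stage, so that only finitely much of the
refinement map of `D j` has to be guessed. -/
theorem exists_antitone_forall_exists_mem [Infinite J] (h : Guessable J) {P : Type v} [Preorder P]
    [Countable P] [Nonempty P] {D : J → Set P} (hD : ∀ j, IsCoinitial (D j)) :
    ∃ S : ℕ → P, Antitone S ∧ ∀ j, ∃ k, S k ∈ D j := by
  classical
  obtain ⟨e, he⟩ := exists_surjective_nat P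
  have hrefine (j : J) (s : ℕ) : ∃ t, e t ∈ D j ∧ e t ≤ e s := by
    obtain ⟨q, hqD, hq⟩ := hD j (e s)
    obtain ⟨t, rfl⟩ := he q
    exact ⟨t, hqD, hq⟩
  choose f hfD hfle using hrefine
  obtain ⟨a, ha, hfreq⟩ := h.exists_strictMono_frequently_le f
  obtain ⟨g, hg⟩ := h.exists_mem_eq (fun j => Nat.frequently_atTop_iff_infinite.1 (hfreq j))
    (β := fun k => Iic (a k) → ℕ) fun j k s => f j s
  let next (k : ℕ) (s : Iic (a k)) : Iic (a (k + 1)) :=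
    if hs : g k s ≤ a (k + 1) ∧ e (g k s) ≤ e s then ⟨g k s, hs.1⟩
    else ⟨s, s.2.trans (ha.monotone k.le_succ)⟩
  let S : ∀ k, Iic (a k) := Nat.rec ⟨0, Nat.zero_le _⟩ next
  refine ⟨fun k => e (S k).1, antitone_nat_of_succ_le fun k => ?_, fun j => ?_⟩
  · change e (next k (S k)).1 ≤ e (S k).1
    dsimp only [next]
    split_ifs with hs
    exacts [hs.2, le_rfl]
  · obtain ⟨k, hk, hgk⟩ := hg j
    have hgS : g k (S k) = f j (S k).1 := (congrFun hgk (S k)).symm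
    have hS : (S (k + 1)).1 = f j (S k).1 := by
      change (next k (S k)).1 = f j (S k).1
      simp only [next, hgS, hk _ (S k).2, hfle, and_self, dite_true]
    exact ⟨k + 1, by simpa only [hS] using hfD j (S k).1⟩

end Guessable

theorem infinite_of_iUnion_isMeagre_eq_univ {Y : Type v} [TopologicalSpace Y] [BaireSpace Y]
    [Nonempty Y] {I : Type u} {M : I → Set Y} (hM : ∀ i, IsMeagre (M i)) (hcov : ⋃ i, M i = univ) :
    Infinite I := by
  by_contra hfin
  rw [not_infinite_iff_finite] at hfin
  exact not_isMeagre_of_isOpen isOpen_univ univ_nonempty (hcov ▸ isMeagre_iUnion hM)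

section LocallyCompact

variable {Y : Type v} [TopologicalSpace Y] [R1Space Y] [LocallyCompactSpace Y]

theorem exists_mem_basis_isCompact_closure_subset {b : Set (Set Y)} (hb : IsTopologicalBasis b)
    {U : Set Y} (hU : IsOpen U) (hne : U.Nonempty) :
    ∃ V ∈ b, V.Nonempty ∧ IsCompact (closure V) ∧ closure V ⊆ U := by
  obtain ⟨K, hKU⟩ := hU.exists_positiveCompacts_closure_subset hne
  obtain ⟨x, hx⟩ := K.interior_nonempty
  obtain ⟨V, hV, hxV, hVK⟩ := hb.exists_subset_of_mem_open hx isOpen_interior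
  have hVK : closure V ⊆ closure K := closure_mono (hVK.trans interior_subset)
  exact ⟨V, hV, ⟨x, hxV⟩, K.isCompact.closure.of_isClosed_subset isClosed_closure hVK,
    hVK.trans hKU⟩

variable [SecondCountableTopology Y] [Nonempty Y]

theorem Guessable.nonempty_iInter_of_isOpen_of_dense {J : Type u} [Infinite J] (h : Guessable J)
    {U : J → Set Y} (hU : ∀ j, IsOpen (U j)) (hd : ∀ j, Dense (U j)) : (⋂ j, U j).Nonempty := by
  let P := {V // V ∈ countableBasis Y ∧ V.Nonempty ∧ IsCompact (closure V)}
  have : Countable P := ((countable_countableBasis Y).mono fun _ hV => hV.1).to_subtype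
  have hP {W : Set Y} (hW : IsOpen W) (hne : W.Nonempty) : ∃ V : P, closure V.1 ⊆ W := by
    obtain ⟨V, hV, hVne, hVc, hVW⟩ :=
      exists_mem_basis_isCompact_closure_subset (isBasis_countableBasis Y) hW hne
    exact ⟨⟨V, hV, hVne, hVc⟩, hVW⟩
  have : Nonempty P := (hP isOpen_univ univ_nonempty).nonempty
  have hcoinitial (j : J) : IsCoinitial {V : P | closure V.1 ⊆ U j} := fun V => by
    have hV : IsOpen V.1 := isOpen_of_mem_countableBasis V.2.1
    obtain ⟨W, hW⟩ := hP (hV.inter (hU j)) ((hd j).inter_open_nonempty _ hV V.2.2.1)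
    exact ⟨W, hW.trans inter_subset_right, subset_closure.trans (hW.trans inter_subset_left)⟩
  obtain ⟨S, hanti, hS⟩ := h.exists_antitone_forall_exists_mem hcoinitial
  obtain ⟨y, hy⟩ := IsCompact.nonempty_iInter_of_sequence_nonempty_isCompact_isClosed
    (fun k => closure (S k).1) (fun k => closure_mono (hanti k.le_succ))
    (fun k => (S k).2.2.1.closure) (S 0).2.2.2 fun _ => isClosed_closure
  refine ⟨y, mem_iInter.2 fun j => ?_⟩
  obtain ⟨k, hk⟩ := hS j
  exact hk (mem_iInter.1 hy k)

theorem not_guessable_of_iUnion_isMeagre_eq_univ {I : Type u} {M : I → Set Y}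
    (hM : ∀ i, IsMeagre (M i)) (hcov : ⋃ i, M i = univ) : ¬ Guessable I := fun h => by
  have := infinite_of_iUnion_isMeagre_eq_univ hM hcov
  have hdense (i : I) : ∃ V : ℕ → Set Y,
      (∀ n, IsOpen (V n)) ∧ (∀ n, Dense (V n)) ∧ ⋂ n, V n ⊆ (M i)ᶜ := by
    obtain ⟨G, hGM, hG, hGd⟩ := mem_residual.1 (hM i)
    obtain ⟨V, hV, rfl⟩ := hG.eq_iInter_nat
    exact ⟨V, hV, fun n => hGd.mono (iInter_subset V n), hGM⟩
  choose V hVo hVd hVM using hdense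
  obtain ⟨y, hy⟩ := h.prod_nat.nonempty_iInter_of_isOpen_of_dense (U := fun p => V p.1 p.2)
    (fun p => hVo p.1 p.2) (fun p => hVd p.1 p.2)
  obtain ⟨i, hi⟩ := iUnion_eq_univ_iff.1 hcov y
  exact hVM i (mem_iInter.2 fun n => mem_iInter.1 hy (i, n)) hi

end LocallyCompact

theorem exists_cover_tsum_ediam_rpow_lt_of_dimH_lt {X : Type u} [EMetricSpace X] {s : Set X}
    {d : ℝ≥0} (hd : dimH s < d) {c : ℝ≥0∞} (hc : 0 < c) :
    ∃ t : ℕ → Set X, s ⊆ ⋃ n, t n ∧ ∑' n, Metric.ediam (t n) ^ (d : ℝ) < c := by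
  borelize X
  have hdpos : 0 < d := by exact_mod_cast zero_le.trans_lt hd
  have hzero := hausdorffMeasure_of_dimH_lt hd
  simp only [MeasureTheory.Measure.hausdorffMeasure_apply, ENNReal.iSup_eq_zero] at hzero
  have hlt := (hzero 1 one_pos).trans_lt hc
  simp only [iInf_lt_iff] at hlt
  obtain ⟨t, hst, -, ht⟩ := hlt
  refine ⟨t, hst, (ENNReal.tsum_le_tsum fun n => ?_).trans_lt ht⟩
  rcases (t n).eq_empty_or_nonempty with hempty | hne
  · simp [hempty, hdpos]
  · exact le_iSup_of_le hne le_rfl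

theorem exists_pow_succ_lt_le_pow {y w : ℝ≥0∞} (hy : y < 1) (hw : w ≠ 0) (hw1 : w ≤ 1) :
    ∃ n : ℕ, y ^ (n + 1) < w ∧ w ≤ y ^ n := by
  have hex : ∃ n : ℕ, y ^ (n + 1) < w :=
    (((ENNReal.tendsto_pow_atTop_nhds_zero_of_lt_one hy).comp (tendsto_add_atTop_nat 1)).eventually
      (gt_mem_nhds (pos_iff_ne_zero.2 hw))).exists
  classical
  refine ⟨Nat.find hex, Nat.find_spec hex, ?_⟩
  rcases hn : Nat.find hex with _ | n
  · simpa using hw1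
  · exact not_lt.1 (Nat.find_min hex (hn ▸ n.lt_succ_self))

theorem exists_scale_of_tsum_lt_pow {ι : Type u} [Countable ι] {y : ℝ≥0∞} (hy : y < 1)
    {w : ι → ℝ≥0∞} {m : ℕ} (hw : ∑' i, w i < y ^ m) :
    ∃ N : ι → ℕ, (∀ i, m ≤ N i ∧ w i < y ^ N i) ∧
      ∀ s : Finset ι, s.Nonempty → ∃ i ∈ s, s.card * y ^ (N i + 1) ≤ 1 := by
  obtain ⟨ε, hε, hεsum⟩ := ENNReal.exists_pos_sum_of_countable' (tsub_pos_of_lt hw).ne' ι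
  have hsum : ∑' i, (w i + ε i) ≤ y ^ m := by
    rw [ENNReal.tsum_add]
    calc ∑' i, w i + ∑' i, ε i ≤ ∑' i, w i + (y ^ m - ∑' i, w i) := by gcongr
      _ = y ^ m := add_tsub_cancel_of_le hw.le
  have hpow : y ^ m ≤ 1 := pow_le_one₀ zero_le hy.le
  have hle (i : ι) : w i + ε i ≤ y ^ m := (ENNReal.le_tsum i).trans hsum
  choose N hN hN' using fun i =>
    exists_pow_succ_lt_le_pow hy (add_pos_of_right (hε i) (w i)).ne' ((hle i).trans hpow)
  refine ⟨N, fun i => ⟨?_, ?_⟩, fun s hs => ?_⟩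
  · by_contra! hlt
    exact ((hN i).trans_le (hle i)).not_ge (pow_le_pow_of_le_one zero_le hy.le hlt)
  · exact (ENNReal.lt_add_right (ne_top_of_le_ne_top (hpow.trans_lt ENNReal.one_lt_top).ne
      (le_self_add.trans (hle i))) (hε i).ne').trans_le (hN' i)
  · obtain ⟨i, hi, hmax⟩ := s.exists_max_image N hs
    refine ⟨i, hi, ?_⟩
    calc s.card * y ^ (N i + 1) = ∑ _j ∈ s, y ^ (N i + 1) := by simp
      _ ≤ ∑ j ∈ s, (w j + ε j) := Finset.sum_le_sum fun j hj =>
        (pow_le_pow_of_le_one zero_le hy.le (Nat.succ_le_succ (hmax j hj))).trans (hN j).le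
      _ ≤ 1 := (ENNReal.sum_le_tsum s).trans (hsum.trans hpow)

/-- Sequences whose `n`-th term is a block of `B n` natural numbers, with the first-difference
metric: `dist x y = (1 / 2) ^ n`, where `n` is the first level at which `x` and `y` differ. -/
def BlockSpace (B : ℕ → ℕ) : Type := ∀ n, Fin (B n) → ℕ

namespace BlockSpace

variable {B : ℕ → ℕ}

noncomputable instance : MetricSpace (BlockSpace B) :=
  PiNat.metricSpace (E := fun n => Fin (B n) → ℕ)

instance : SecondCountableTopology (BlockSpace B) :=
  inferInstanceAs (SecondCountableTopology (∀ n, Fin (B n) → ℕ))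

theorem apply_eq_of_edist_lt {x y : BlockSpace B} {n : ℕ} (h : edist x y < 2⁻¹ ^ n) :
    x n = y n := by
  have hpow : (2⁻¹ : ℝ≥0∞) ^ n = ENNReal.ofReal ((1 / 2) ^ n) := by
    rw [ENNReal.ofReal_pow (by norm_num), one_div, ENNReal.ofReal_inv_of_pos two_pos,
      ENNReal.ofReal_ofNat]
  rw [hpow, edist_lt_ofReal] at h
  exact PiNat.apply_eq_of_dist_lt (E := fun n => Fin (B n) → ℕ) h le_rfl

/-- The recoding of a sequence that lists at level `n` its first `B n` terms. -/
def ofSeq (B : ℕ → ℕ) (x : ℕ → ℕ) : BlockSpace B := fun _ i => x i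

theorem exists_ofSeq_notMem_iUnion {K : Type u} {ι : Type v} {f : K → ℕ → ℕ}
    (hf : ∀ g : ℕ → ℕ, ∃ k, ∀ n, f k n ≠ g n) {t : ι → Set (BlockSpace B)} {N : ι → ℕ}
    (ht : ∀ i, ∀ x ∈ t i, ∀ y ∈ t i, x (N i) = y (N i))
    (hN : ∀ s : Finset ι, s.Nonempty → ∃ i ∈ s, s.card ≤ B (N i)) :
    ∃ k, ofSeq B (f k) ∉ ⋃ i, t i := by
  obtain ⟨p, hpinj, hp⟩ := exists_injective_forall_mem_of_card_le
    (t := fun i => Finset.range (B (N i))) (by simpa using hN)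
  have hblock (i : ι) : ∃ v : Fin (B (N i)) → ℕ, ∀ x ∈ t i, x (N i) = v := by
    rcases (t i).eq_empty_or_nonempty with hempty | ⟨x, hx⟩
    · exact ⟨0, by simp [hempty]⟩
    · exact ⟨x (N i), fun y hy => ht i y hy x hx⟩
  choose v hv using hblock
  obtain ⟨k, hk⟩ := hf (Function.extend p (fun i => v i ⟨p i, Finset.mem_range.1 (hp i)⟩) 0)
  refine ⟨k, fun hmem => ?_⟩
  obtain ⟨i, hi⟩ := mem_iUnion.1 hmem
  refine hk (p i) ?_
  rw [hpinj.extend_apply, ← hv i _ hi]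
  rfl

theorem dimH_range_ofSeq_eq_top {K : Type u} {f : K → ℕ → ℕ}
    (hf : ∀ g : ℕ → ℕ, ∃ k, ∀ n, f k n ≠ g n) (hB : ∀ n, 2 ^ (n * (n + 1)) ≤ B n) :
    dimH (range fun k => ofSeq B (f k)) = ⊤ := by
  by_contra hfin
  obtain ⟨D, hD⟩ := ENNReal.exists_nat_gt hfin
  have hD0 : D ≠ 0 := by
    rintro rfl
    simp at hD
  obtain ⟨t, hcov, hsum⟩ := exists_cover_tsum_ediam_rpow_lt_of_dimH_lt (d := D) (mod_cast hD)
    (c := (2⁻¹ ^ D) ^ D) (by simp [pos_iff_ne_zero])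
  simp only [NNReal.coe_natCast, ENNReal.rpow_natCast] at hsum
  obtain ⟨N, hN, hcard⟩ := exists_scale_of_tsum_lt_pow
    (pow_lt_one' (ENNReal.inv_lt_one.2 ENNReal.one_lt_two) hD0) hsum
  have hagree (i : ℕ) : ∀ x ∈ t i, ∀ y ∈ t i, x (N i) = y (N i) := fun x hx y hy => by
    refine apply_eq_of_edist_lt (lt_of_pow_lt_pow_left' D ?_)
    calc edist x y ^ D ≤ Metric.ediam (t i) ^ D := by
          gcongr
          exact Metric.edist_le_ediam_of_mem hx hy
      _ < (2⁻¹ ^ D) ^ N i := (hN i).2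
      _ = (2⁻¹ ^ N i) ^ D := pow_right_comm _ _ _
  have hcount (s : Finset ℕ) (hs : s.Nonempty) : ∃ i ∈ s, s.card ≤ B (N i) := by
    obtain ⟨i, hi, hle⟩ := hcard s hs
    refine ⟨i, hi, le_trans ?_ ((Nat.pow_le_pow_right two_pos
      (Nat.mul_le_mul_right _ (hN i).1)).trans (hB (N i)))⟩
    rw [← pow_mul, ← ENNReal.inv_pow, ← div_eq_mul_inv,
      ENNReal.div_le_iff (by simp) (by simp), one_mul] at hle
    exact_mod_cast hle
  obtain ⟨k, hk⟩ := exists_ofSeq_notMem_iUnion hf hagree hcount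
  exact hk (hcov (mem_range_self k))

end BlockSpace

theorem range_ne_Icc_of_mk_lt_continuum {X : Type u} (hX : Cardinal.mk X < Cardinal.continuum)
    (f : X → ℝ) {a b : ℝ} (hab : a < b) : range f ≠ Icc a b := fun heq => by
  have hle := Cardinal.mk_range_le_lift (f := f)
  rw [heq, Cardinal.mk_Icc_real hab, Cardinal.lift_continuum, Cardinal.lift_uzero] at hle
  exact hX.not_ge (by simpa using hle)

theorem covMeager_lt_continuum_imp_exists_small_separable_large_dimH_general
    {I : Type u} {Y : Type v} [TopologicalSpace Y] [R1Space Y] [LocallyCompactSpace Y]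
    [SecondCountableTopology Y] [Nonempty Y] {M : I → Set Y} (hM : ∀ i, IsMeagre (M i))
    (hcov : ⋃ i, M i = univ) :
    ∃ (X : Type) (_ : MetricSpace X),
      SeparableSpace X ∧ Cardinal.lift.{u} (Cardinal.mk X) ≤ Cardinal.mk I ∧
      dimH (univ : Set X) = ⊤ := by
  have hI := not_guessable_of_iUnion_isMeagre_eq_univ hM hcov
  simp only [Guessable, not_forall, not_exists] at hI
  obtain ⟨f, hf⟩ := hI
  refine ⟨range fun i => BlockSpace.ofSeq (fun n => 2 ^ (n * (n + 1))) (f i), inferInstance,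
    inferInstance, Cardinal.mk_range_le_lift.trans_eq (Cardinal.lift_uzero _), ?_⟩
  rw [← isometry_subtype_coe.dimH_image, image_univ, Subtype.range_coe,
    BlockSpace.dimH_range_ofSeq_eq_top hf fun _ => le_rfl]

/-- Assume that `ℝ` can be covered by fewer than continuum many meager sets
(`cov(M) < 𝔠`). Then for every real number `r` there exists a separable metric space `X` of
cardinality strictly less than `𝔠` whose Hausdorff dimension is at least `r`; consequently no
function from `X` onto a non-degenerate segment exists. -/
theorem covMeager_lt_continuum_imp_exists_small_separable_large_dimH
    (hcov : ∃ (I : Type) (M : I → Set ℝ),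
      Cardinal.mk I < Cardinal.continuum ∧ (∀ i, IsMeagre (M i)) ∧ (⋃ i, M i) = Set.univ)
    (r : ℝ) :
    ∃ (X : Type) (_ : MetricSpace X),
      TopologicalSpace.SeparableSpace X ∧
      Cardinal.mk X < Cardinal.continuum ∧
      ENNReal.ofReal r ≤ dimH (Set.univ : Set X) ∧
      ∀ (f : X → ℝ) (a b : ℝ), a < b → Set.range f ≠ Set.Icc a b := by
  obtain ⟨I, M, hI, hM, hMcov⟩ := hcov
  obtain ⟨X, _, hsep, hcard, hdim⟩ :=
    covMeager_lt_continuum_imp_exists_small_separable_large_dimH_general hM hMcov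
  have hX : Cardinal.mk X < Cardinal.continuum := (Cardinal.lift_id _ ▸ hcard).trans_lt hI
  exact ⟨X, _, hsep, hX, hdim ▸ le_top, fun f a b => range_ne_Icc_of_mk_lt_continuum hX f⟩
end
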